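/- arXiv:math/0306246 — 3 statements merged into one kernel-verified Lean document; each statement's English description precedes it below -/
import Mathlib

section
/- Let V_r^+ := φ({v ∈ C^{r+1}_* : v_{r+1} = +1}) and let Z_{r,m}^+ be an m-element subset of V_r^+ chosen uniformly at random. Then α(r+1, m) = E[α(Z_{r,m}^+)], where for a fixed finite set S ⊂ ℝ^r, α(S) := P[0 ∉ conv{ε_s · s : s ∈ S}] with ε ∈ {−1,+1}^S chosen uniformly at random. -/
open Finset Filter MeasureTheory

open scoped Classical

noncomputable section

/-- The vertex set `{0,1}^d` of the 0/1-cube, as a finite subset of `ℝ^d`. -/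
def cube01 (d : ℕ) : Finset (Fin d → ℝ) :=
  (Finset.univ : Finset (Fin d → Bool)).image (fun f i => if f i then 1 else 0)

/-- The vertex set `{-1,+1}^d` of the `±1`-cube, as a finite subset of `ℝ^d`. -/
def pmCube (d : ℕ) : Finset (Fin d → ℝ) :=
  (Finset.univ : Finset (Fin d → Bool)).image (fun f i => if f i then 1 else -1)

/-- The all-one vector `𝟙 ∈ ℝ^d`. -/
def allOne (d : ℕ) : Fin d → ℝ := fun _ => 1

/-- `C^d_* = {-1,+1}^d \ {-𝟙, 𝟙}`. -/
def pmCubeStar (d : ℕ) : Finset (Fin d → ℝ) :=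
  (pmCube d) \ {-(allOne d), allOne d}

/-- `{v,w}` spans an edge (a one-dimensional face) of the polytope `P`:
`v ≠ w` and the segment `[v,w]` is an (exposed) face of `P`. -/
def IsEdge {d : ℕ} (P : Set (Fin d → ℝ)) (v w : Fin d → ℝ) : Prop :=
  v ≠ w ∧ IsExposed ℝ P (segment ℝ v w)

/-- The number of edges of the graph of the polytope `conv X`. -/
noncomputable def edgeCount {d : ℕ} (X : Finset (Fin d → ℝ)) : ℕ :=
  ((X.powersetCard 2).filter (fun e =>
      ∃ v w, e = {v, w} ∧ IsEdge (convexHull ℝ (X : Set (Fin d → ℝ))) v w)).card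

/-- The density of the graph of the polytope `conv X` (whose vertex set is `X`
when `X` consists of 0/1- or `±1`-points): number of edges divided by `C(|X|,2)`. -/
noncomputable def graphDensity {d : ℕ} (X : Finset (Fin d → ℝ)) : ℝ :=
  (edgeCount X : ℝ) / (X.card.choose 2 : ℝ)

/-- The expected graph-density of the convex hull of a uniformly random
`n`-element subset of `{0,1}^d`. -/
noncomputable def expDensity (d n : ℕ) : ℝ :=
  (∑ X ∈ (cube01 d).powersetCard n, graphDensity X) /
    (((cube01 d).powersetCard n).card : ℝ)

/-- The Hamming distance of `v, w ∈ ℝ^d`. -/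
def hdist {d : ℕ} (v w : Fin d → ℝ) : ℕ :=
  (Finset.univ.filter (fun i => v i ≠ w i)).card

/-- `C(v,w)`: the points of the `±1`-cube agreeing with `v` and `w` wherever these agree
(the vertex set of the smallest face of the cube containing `v` and `w`). -/
def cubeFace {d : ℕ} (v w : Fin d → ℝ) : Finset (Fin d → ℝ) :=
  (pmCube d).filter (fun x => ∀ i, v i = w i → x i = v i)

/-- `C_*(v,w) = C(v,w) \ {v,w}`. -/
def cubeFaceStar {d : ℕ} (v w : Fin d → ℝ) : Finset (Fin d → ℝ) :=
  (cubeFace v w) \ {v, w}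

/-- The long-edge probability `τ(k,m)`: the probability that for a uniformly random
`m`-element subset `Y ⊆ C^k_*`, `conv Y ∩ conv{-𝟙,𝟙} = ∅`. -/
noncomputable def tau (k m : ℕ) : ℝ :=
  ((((pmCubeStar k).powersetCard m).filter (fun Y =>
      convexHull ℝ (Y : Set (Fin k → ℝ)) ∩ segment ℝ (-(allOne k)) (allOne k) = ∅)).card : ℝ) /
    ((((pmCubeStar k).powersetCard m)).card : ℝ)

/-- `Y ∩ (-Y) = ∅`. -/
def NoAntipodal {k : ℕ} (Y : Finset (Fin k → ℝ)) : Prop := ∀ y ∈ Y, -y ∉ Y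

/-- `α(k,m)`: the conditional probability that `conv Y ∩ conv{-𝟙,𝟙} = ∅`
given `Y ∩ (-Y) = ∅`, for a uniformly random `m`-element subset `Y ⊆ C^k_*`. -/
noncomputable def alpha (k m : ℕ) : ℝ :=
  ((((pmCubeStar k).powersetCard m).filter (fun (Y : Finset (Fin k → ℝ)) =>
      convexHull ℝ (Y : Set (Fin k → ℝ)) ∩ segment ℝ (-(allOne k)) (allOne k) = ∅ ∧
        NoAntipodal Y)).card : ℝ) /
    ((((pmCubeStar k).powersetCard m).filter (fun Y => NoAntipodal Y)).card : ℝ)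

/-- The sample space for a uniformly random `n`-element subset `X ⊆ {-1,+1}^d`
together with a uniformly random `2`-element subset `{v,w} ⊆ X`. -/
def edgeSpace (d n : ℕ) : Finset (Finset (Fin d → ℝ) × Finset (Fin d → ℝ)) :=
  (((pmCube d).powersetCard n) ×ˢ ((pmCube d).powersetCard 2)).filter (fun p => p.2 ⊆ p.1)

/-- The event that the chosen pair `{v,w}` is an edge of `conv X`. -/
def EdgeEvent {d : ℕ} (p : Finset (Fin d → ℝ) × Finset (Fin d → ℝ)) : Prop :=
  ∃ v w, p.2 = {v, w} ∧ IsEdge (convexHull ℝ (p.1 : Set (Fin d → ℝ))) v w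

/-- The event that the chosen pair `{v,w}` satisfies `dist(v,w) = k`. -/
def DistEvent {d : ℕ} (k : ℕ) (p : Finset (Fin d → ℝ) × Finset (Fin d → ℝ)) : Prop :=
  ∃ v w, v ≠ w ∧ p.2 = {v, w} ∧ hdist v w = k

/-- The event that the chosen pair `{v,w}` satisfies `dist(v,w) = k` and
`#(X ∩ C_*(v,w)) = m`. -/
def DistCapEvent {d : ℕ} (k m : ℕ) (p : Finset (Fin d → ℝ) × Finset (Fin d → ℝ)) : Prop :=
  ∃ v w, v ≠ w ∧ p.2 = {v, w} ∧ hdist v w = k ∧ (p.1 ∩ cubeFaceStar v w).card = m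

/-- The edge probability `π(d,n)`. -/
noncomputable def piEdge (d n : ℕ) : ℝ :=
  (((edgeSpace d n).filter (fun p => EdgeEvent p)).card : ℝ) / ((edgeSpace d n).card : ℝ)

/-- The conditional edge probability `π_k(d,n)` given `dist(v,w) = k`. -/
noncomputable def piEdgeK (d n k : ℕ) : ℝ :=
  (((edgeSpace d n).filter (fun p => EdgeEvent p ∧ DistEvent k p)).card : ℝ) /
    (((edgeSpace d n).filter (fun p => DistEvent k p)).card : ℝ)

/-- `φ : ℝ^{r+1} → ℝ^r`: the orthogonal projection onto the hyperplane
`H_𝟙 = {x : 𝟙ᵀx = 0}` (namely `x ↦ x - ((𝟙ᵀx)/(r+1))·𝟙`), followed by the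
projection to the first `r` coordinates. -/
noncomputable def phi (r : ℕ) (x : Fin (r + 1) → ℝ) : Fin r → ℝ :=
  fun i => x i.castSucc - (∑ j, x j) / (r + 1 : ℝ)

/-- The vector configuration `V_r = φ(C^{r+1}_*)`. -/
noncomputable def Vr (r : ℕ) : Finset (Fin r → ℝ) := (pmCubeStar (r + 1)).image (phi r)

/-- The half configuration `V_r^+ = φ({v ∈ C^{r+1}_* : v_{r+1} = +1})`. -/
noncomputable def VrPlus (r : ℕ) : Finset (Fin r → ℝ) :=
  (((pmCubeStar (r + 1)).filter (fun v => v (Fin.last r) = 1))).image (phi r)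

/-- The number of sign vectors `ε ∈ {-1,+1}^S` with `0 ∉ conv{ε_s · s : s ∈ S}`. -/
noncomputable def signCount {r : ℕ} (S : Finset (Fin r → ℝ)) : ℕ :=
  ((Finset.univ : Finset (↥S → Bool)).filter (fun ε =>
      (0 : Fin r → ℝ) ∉ convexHull ℝ
        (Set.range fun s : ↥S => (if ε s then (1 : ℝ) else -1) • (s : Fin r → ℝ)))).card

/-- `α(S)`: the probability that `0 ∉ conv{ε_s · s : s ∈ S}` for a uniformly random
sign vector `ε ∈ {-1,+1}^S`. -/
noncomputable def alphaSet {r : ℕ} (S : Finset (Fin r → ℝ)) : ℝ :=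
  (signCount S : ℝ) / ((Finset.univ : Finset (↥S → Bool)).card : ℝ)

/-- The complement `ℝ^r \ ⋃_{s ∈ S} H(s)` of the hyperplane arrangement `ℋ(S)`. -/
def arrComplement {r : ℕ} (S : Finset (Fin r → ℝ)) : Set (Fin r → ℝ) :=
  {x | ∀ s ∈ S, ∑ i, s i * x i ≠ 0}

/-- `χ(S)`: the number of chambers (connected components of the complement)
of the hyperplane arrangement `ℋ(S)`. -/
noncomputable def chi {r : ℕ} (S : Finset (Fin r → ℝ)) : ℕ :=
  Nat.card (ConnectedComponents ↥(arrComplement S))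

/-- `b(p,q) = ∑_{i=0}^p C(q,i)`. -/
def bFn (p q : ℕ) : ℕ := ∑ i ∈ Finset.range (p + 1), q.choose i

/-- The half of `C^{r+1}_*` with last coordinate one. -/
def halfStar (r : ℕ) : Finset (Fin (r + 1) → ℝ) :=
  (pmCubeStar (r + 1)).filter (fun v => v (Fin.last r) = 1)

lemma mem_pmCube_iff {d : ℕ} (x : Fin d → ℝ) : x ∈ pmCube d ↔ ∀ i, x i = 1 ∨ x i = -1 := by
  unfold pmCube
  simp only [Finset.mem_image, Finset.mem_univ, true_and]
  constructor
  · rintro ⟨f, rfl⟩ i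
    by_cases h : f i <;> simp [h]
  · intro h
    refine ⟨fun i => decide (x i = 1), ?_⟩
    funext i
    rcases h i with h | h
    · simp [h]
    · have h2 : ¬ x i = 1 := by rw [h]; norm_num
      simp only [decide_eq_true_eq, if_neg h2]
      exact h.symm

lemma mem_star_iff {d : ℕ} (x : Fin d → ℝ) :
    x ∈ pmCubeStar d ↔ (∀ i, x i = 1 ∨ x i = -1) ∧ x ≠ -(allOne d) ∧ x ≠ allOne d := by
  unfold pmCubeStar
  simp [mem_pmCube_iff]

lemma neg_mem_star {d : ℕ} {x : Fin d → ℝ} (h : x ∈ pmCubeStar d) : -x ∈ pmCubeStar d := by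
  rw [mem_star_iff] at h ⊢
  obtain ⟨h1, h2, h3⟩ := h
  refine ⟨fun i => ?_, fun h => h3 (neg_injective h), fun h => h2 ?_⟩
  · rcases h1 i with h | h <;> simp [h]
  · rw [← h, neg_neg]

/-- `phi` as a linear map. -/
def phiL (r : ℕ) : (Fin (r + 1) → ℝ) →ₗ[ℝ] (Fin r → ℝ) where
  toFun := phi r
  map_add' x y := by
    funext i
    simp only [phi, Pi.add_apply, Finset.sum_add_distrib]
    ring
  map_smul' c x := by
    funext i
    simp only [phi, Pi.smul_apply, smul_eq_mul, RingHom.id_apply, ← Finset.mul_sum]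
    ring

lemma phi_smul (r : ℕ) (c : ℝ) (x) : phi r (c • x) = c • phi r x := (phiL r).map_smul c x

lemma phi_sub (r : ℕ) (x y) : phi r (x - y) = phi r x - phi r y := (phiL r).map_sub x y

lemma phi_eq_zero {r : ℕ} {x : Fin (r + 1) → ℝ} (h : phi r x = 0) (i : Fin (r + 1)) :
    x i = x (Fin.last r) := by
  have h1 : ∀ i : Fin r, x i.castSucc = (∑ j, x j) / (r + 1 : ℝ) := by
    intro i
    have := congrFun h i
    simp only [phi, Pi.zero_apply] at this
    linarith
  have h2 : x (Fin.last r) = (∑ j, x j) / (r + 1 : ℝ) := by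
    have h3 := Fin.sum_univ_castSucc x
    have h4 : ∑ i : Fin r, x i.castSucc = r * ((∑ j, x j) / (r + 1 : ℝ)) := by
      rw [Finset.sum_congr rfl (fun i _ => h1 i)]
      simp
    rw [h4] at h3
    have hr : (r + 1 : ℝ) ≠ 0 := by positivity
    have h5 : (∑ j, x j) = (r + 1 : ℝ) * ((∑ j, x j) / (r + 1 : ℝ)) := by
      field_simp
    linarith
  refine Fin.lastCases rfl (fun i => ?_) i
  rw [h1, h2]

lemma phi_smul_allOne (r : ℕ) (c : ℝ) : phi r (c • allOne (r + 1)) = 0 := by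
  funext i
  have hr : (r + 1 : ℝ) ≠ 0 := by positivity
  simp [phi, allOne]
  field_simp
  ring

lemma phi_injOn (r : ℕ) : Set.InjOn (phi r) (halfStar r : Set (Fin (r + 1) → ℝ)) := by
  intro x hx y hy h
  simp only [halfStar, Finset.coe_filter, Set.mem_ofPred_eq] at hx hy
  have h0 : phi r (x - y) = 0 := by rw [phi_sub, h, sub_self]
  funext i
  have := phi_eq_zero h0 i
  simp only [Pi.sub_apply, hx.2, hy.2] at this
  linarith

/-- A right inverse of `phi` on the half configuration. -/
def psi (r : ℕ) : (Fin r → ℝ) → (Fin (r + 1) → ℝ) :=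
  Function.invFunOn (phi r) (halfStar r : Set (Fin (r + 1) → ℝ))

lemma psi_mem {r : ℕ} {s} (hs : s ∈ VrPlus r) : psi r s ∈ halfStar r := by
  have : ∃ a ∈ (halfStar r : Set (Fin (r + 1) → ℝ)), phi r a = s := by
    simpa [VrPlus, halfStar] using hs
  exact Function.invFunOn_mem this

lemma phi_psi {r : ℕ} {s} (hs : s ∈ VrPlus r) : phi r (psi r s) = s := by
  have : ∃ a ∈ (halfStar r : Set (Fin (r + 1) → ℝ)), phi r a = s := by
    simpa [VrPlus, halfStar] using hs
  exact Function.invFunOn_eq this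

lemma psi_phi {r : ℕ} {a} (ha : a ∈ halfStar r) : psi r (phi r a) = a := by
  have hs : phi r a ∈ VrPlus r := Finset.mem_image_of_mem _ ha
  exact phi_injOn r (psi_mem hs) ha (phi_psi hs)

/-- The sign of a Boolean. -/
def sg (b : Bool) : ℝ := if b then 1 else -1

/-- The representative of `± y` with last coordinate one. -/
def nrm {r : ℕ} (y : Fin (r + 1) → ℝ) : Fin (r + 1) → ℝ := (y (Fin.last r)) • y

lemma nrm_mem {r : ℕ} {y : Fin (r + 1) → ℝ} (hy : y ∈ pmCubeStar (r + 1)) :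
    nrm y ∈ halfStar r := by
  have h1 := ((mem_star_iff y).1 hy).1 (Fin.last r)
  simp only [halfStar, Finset.mem_filter, nrm]
  rcases h1 with h | h
  · rw [h]; simp [hy, h]
  · rw [h]; simp [neg_mem_star hy, h]

lemma nrm_sg {r : ℕ} {y : Fin (r + 1) → ℝ} (hy : y ∈ halfStar r) (b : Bool) :
    nrm (sg b • y) = y := by
  have h : y (Fin.last r) = 1 := (Finset.mem_filter.1 hy).2
  cases b <;> simp [nrm, sg, h]

/-- The set of lifts of the signed vectors. -/
def lift9 {r : ℕ} (Z : Finset (Fin r → ℝ)) (ε : ↥Z → Bool) : Finset (Fin (r + 1) → ℝ) :=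
  Finset.univ.image (fun s : ↥Z => sg (ε s) • psi r s)

/-- Forgetting signs. -/
def forget9 {r : ℕ} (Y : Finset (Fin (r + 1) → ℝ)) : Finset (Fin r → ℝ) :=
  Y.image (fun y => phi r (nrm y))

lemma sg_inj {r : ℕ} {y : Fin (r + 1) → ℝ} (hy : y ∈ halfStar r) {b c : Bool}
    (h : sg b • y = sg c • y) : b = c := by
  have h1 : y (Fin.last r) = 1 := (Finset.mem_filter.1 hy).2
  have h2 := congrFun h (Fin.last r)
  simp only [Pi.smul_apply, h1, smul_eq_mul, mul_one] at h2
  cases b <;> cases c <;> simp [sg] at h2 ⊢ <;> norm_num at h2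

lemma sg_not (b : Bool) : sg (!b) = - sg b := by cases b <;> simp [sg]

lemma sg_psi_inj {r : ℕ} {s t : Fin r → ℝ} (hs : s ∈ VrPlus r) (ht : t ∈ VrPlus r) {b c : Bool}
    (h : sg b • psi r s = sg c • psi r t) : s = t ∧ b = c := by
  have h1 := congrArg nrm h
  rw [nrm_sg (psi_mem hs), nrm_sg (psi_mem ht)] at h1
  have h2 : s = t := by rw [← phi_psi hs, h1, phi_psi ht]
  subst h2
  exact ⟨rfl, sg_inj (psi_mem hs) h⟩

lemma nrm_injOn {r : ℕ} {Y : Finset (Fin (r + 1) → ℝ)} (hY : Y ⊆ pmCubeStar (r + 1))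
    (hN : NoAntipodal Y) : Set.InjOn (fun y => phi r (nrm y)) (Y : Set (Fin (r + 1) → ℝ)) := by
  intro x hx y hy h
  have h1 : nrm x = nrm y := phi_injOn r (nrm_mem (hY hx)) (nrm_mem (hY hy)) h
  have hx1 := ((mem_star_iff x).1 (hY hx)).1 (Fin.last r)
  have hy1 := ((mem_star_iff y).1 (hY hy)).1 (Fin.last r)
  unfold nrm at h1
  rcases hx1 with hx1 | hx1 <;> rcases hy1 with hy1 | hy1 <;> rw [hx1, hy1] at h1
  · simpa using h1
  · exfalso
    have : x = -y := by simpa using h1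
    exact hN y hy (this ▸ hx)
  · exfalso
    have : -x = y := by simpa using h1
    exact hN x hx (this ▸ hy)
  · simpa using h1

lemma fiber_card {r m : ℕ} (P : Finset (Fin (r + 1) → ℝ) → Prop) (Z : Finset (Fin r → ℝ))
    (hZ : Z ∈ (VrPlus r).powersetCard m) :
    ((((pmCubeStar (r + 1)).powersetCard m).filter (fun Y => P Y ∧ NoAntipodal Y)).filter
      (fun Y => forget9 Y = Z)).card =
    ((Finset.univ : Finset (↥Z → Bool)).filter (fun ε => P (lift9 Z ε))).card := by
  symm
  obtain ⟨hZs, hZc⟩ := Finset.mem_powersetCard.1 hZ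
  refine Finset.card_bij (fun ε _ => lift9 Z ε) ?_ ?_ ?_
  · intro ε hε
    simp only [Finset.mem_filter, Finset.mem_univ, true_and] at hε
    simp only [Finset.mem_filter, Finset.mem_powersetCard]
    refine ⟨⟨⟨?_, ?_⟩, hε, ?_⟩, ?_⟩
    · intro y hy
      obtain ⟨s, -, rfl⟩ := Finset.mem_image.1 hy
      have := (Finset.mem_filter.1 (psi_mem (hZs s.2))).1
      cases ε s
      · simpa [sg] using neg_mem_star this
      · simpa [sg] using this
    · unfold lift9
      rw [Finset.card_image_of_injective, Finset.card_univ, Fintype.card_coe, hZc]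
      intro s t h
      exact Subtype.ext (sg_psi_inj (hZs s.2) (hZs t.2) h).1
    · intro y hy hy'
      obtain ⟨s, -, rfl⟩ := Finset.mem_image.1 hy
      obtain ⟨t, -, h⟩ := Finset.mem_image.1 hy'
      rw [← neg_smul, ← sg_not] at h
      obtain ⟨h1, h2⟩ := sg_psi_inj (hZs t.2) (hZs s.2) h
      have h1 : t = s := Subtype.ext h1
      subst h1
      cases h3 : ε t <;> simp [h3] at h2
    · ext s
      simp only [forget9, lift9, Finset.mem_image, Finset.mem_univ, true_and]
      constructor
      · rintro ⟨_, ⟨t, rfl⟩, rfl⟩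
        rw [nrm_sg (psi_mem (hZs t.2)), phi_psi (hZs t.2)]
        exact t.2
      · intro hs
        refine ⟨_, ⟨⟨s, hs⟩, rfl⟩, ?_⟩
        rw [nrm_sg (psi_mem (hZs hs)), phi_psi (hZs hs)]
  · intro ε _ δ _ h
    funext s
    have h1 : sg (ε s) • psi r s ∈ lift9 Z δ := by
      rw [← h]
      exact Finset.mem_image_of_mem _ (Finset.mem_univ s)
    obtain ⟨t, -, ht⟩ := Finset.mem_image.1 h1
    obtain ⟨h2, h3⟩ := sg_psi_inj (hZs t.2) (hZs s.2) ht
    have h2 : t = s := Subtype.ext h2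
    subst h2
    exact h3.symm
  · intro Y hY
    simp only [Finset.mem_filter, Finset.mem_powersetCard] at hY
    obtain ⟨⟨⟨hYs, hYc⟩, hP, hN⟩, hf⟩ := hY
    have key : ∀ y ∈ Y, sg (decide (psi r (phi r (nrm y)) ∈ Y)) • psi r (phi r (nrm y)) = y := by
      intro y hy
      rw [psi_phi (nrm_mem (hYs hy))]
      rcases ((mem_star_iff y).1 (hYs hy)).1 (Fin.last r) with h | h
      · simp [nrm, h, sg, hy]
      · have := hN y hy
        simp [nrm, h, sg, this]
    have hL : lift9 Z (fun s => decide (psi r s ∈ Y)) = Y := by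
      ext y
      simp only [lift9, Finset.mem_image, Finset.mem_univ, true_and]
      constructor
      · rintro ⟨s, rfl⟩
        have hs : (s : Fin r → ℝ) ∈ forget9 Y := hf.symm ▸ s.2
        obtain ⟨y, hy, hys⟩ := Finset.mem_image.1 hs
        rw [← hys]
        simp only [key y hy]
        exact hy
      · intro hy
        refine ⟨⟨phi r (nrm y), ?_⟩, key y hy⟩
        rw [← hf]
        exact Finset.mem_image_of_mem (fun y => phi r (nrm y)) hy
    refine ⟨fun s => decide (psi r s ∈ Y), ?_, hL⟩
    simp only [Finset.mem_filter, Finset.mem_univ, true_and]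
    rw [hL]
    exact hP

lemma total_card {r m : ℕ} (P : Finset (Fin (r + 1) → ℝ) → Prop) :
    (((pmCubeStar (r + 1)).powersetCard m).filter (fun Y => P Y ∧ NoAntipodal Y)).card =
    ∑ Z ∈ (VrPlus r).powersetCard m,
      ((Finset.univ : Finset (↥Z → Bool)).filter (fun ε => P (lift9 Z ε))).card := by
  rw [Finset.card_eq_sum_card_fiberwise (f := forget9) (t := (VrPlus r).powersetCard m)]
  · exact Finset.sum_congr rfl (fun Z hZ => fiber_card P Z hZ)
  · intro Y hY
    simp only [Finset.coe_filter, Finset.mem_powersetCard, Set.mem_ofPred_eq] at hY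
    obtain ⟨⟨hYs, hYc⟩, hP, hN⟩ := hY
    simp only [Finset.mem_coe, Finset.mem_powersetCard]
    refine ⟨?_, ?_⟩
    · intro s hs
      obtain ⟨y, hy, rfl⟩ := Finset.mem_image.1 hs
      exact Finset.mem_image_of_mem _ (nrm_mem (hYs hy))
    · unfold forget9
      rw [Finset.card_image_of_injOn (nrm_injOn hYs hN), hYc]

lemma conv_iff {r : ℕ} {Y : Finset (Fin (r + 1) → ℝ)} (hY : Y ⊆ pmCubeStar (r + 1)) :
    convexHull ℝ (Y : Set (Fin (r + 1) → ℝ)) ∩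
        segment ℝ (-(allOne (r + 1))) (allOne (r + 1)) = ∅ ↔
      (0 : Fin r → ℝ) ∉ convexHull ℝ (phi r '' (Y : Set (Fin (r + 1) → ℝ))) := by
  have himg : convexHull ℝ (phi r '' (Y : Set (Fin (r + 1) → ℝ))) =
      phi r '' convexHull ℝ (Y : Set (Fin (r + 1) → ℝ)) :=
    ((phiL r).image_convexHull (Y : Set (Fin (r + 1) → ℝ))).symm
  rw [himg, ← not_iff_not, not_not, ← Ne, ← Set.nonempty_iff_ne_empty]
  constructor
  · rintro ⟨x, hx, a, b, ha, hb, hab, rfl⟩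
    refine ⟨_, hx, ?_⟩
    rw [smul_neg, ← neg_smul, ← add_smul, phi_smul_allOne]
  · rintro ⟨x, hx, h0⟩
    refine ⟨x, hx, ?_⟩
    have hc := phi_eq_zero h0
    have hsub : convexHull ℝ (Y : Set (Fin (r + 1) → ℝ)) ⊆ Set.Icc (-1) 1 := by
      refine convexHull_min ?_ (convex_Icc _ _)
      intro y hy
      have h1 := ((mem_star_iff y).1 (hY hy)).1
      constructor <;> intro i <;> rcases h1 i with h | h <;> rw [h] <;> norm_num
    have hb := hsub hx
    have h1 : -1 ≤ x (Fin.last r) := hb.1 (Fin.last r)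
    have h2 : x (Fin.last r) ≤ 1 := hb.2 (Fin.last r)
    refine ⟨(1 - x (Fin.last r)) / 2, (1 + x (Fin.last r)) / 2, by linarith, by linarith,
      by ring, ?_⟩
    funext i
    rw [hc i]
    simp only [allOne, Pi.add_apply, Pi.smul_apply, Pi.neg_apply, smul_eq_mul]
    ring

lemma lift_conv {r : ℕ} {Z : Finset (Fin r → ℝ)} (hZ : Z ⊆ VrPlus r) (ε : ↥Z → Bool) :
    convexHull ℝ (lift9 Z ε : Set (Fin (r + 1) → ℝ)) ∩
        segment ℝ (-(allOne (r + 1))) (allOne (r + 1)) = ∅ ↔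
      (0 : Fin r → ℝ) ∉ convexHull ℝ
        (Set.range fun s : ↥Z => (if ε s then (1 : ℝ) else -1) • (s : Fin r → ℝ)) := by
  rw [conv_iff]
  · have : phi r '' (lift9 Z ε : Set (Fin (r + 1) → ℝ)) =
        Set.range fun s : ↥Z => (if ε s then (1 : ℝ) else -1) • (s : Fin r → ℝ) := by
      unfold lift9
      rw [Finset.coe_image, Finset.coe_univ, Set.image_univ, ← Set.range_comp]
      congr 1
      funext s
      simp only [Function.comp, phi_smul, phi_psi (hZ s.2), sg]
    rw [this]
  · intro y hy
    obtain ⟨s, -, rfl⟩ := Finset.mem_image.1 hy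
    have := (Finset.mem_filter.1 (psi_mem (hZ s.2))).1
    cases ε s
    · simpa [sg] using neg_mem_star this
    · simpa [sg] using this

-- STATEMENT 9
theorem statement9 (r m : ℕ) :
    alpha (r + 1) m =
      (∑ Z ∈ (VrPlus r).powersetCard m, alphaSet Z) /
        (((VrPlus r).powersetCard m).card : ℝ) := by
  have hnum := total_card (r := r) (m := m) (fun Y =>
    convexHull ℝ (Y : Set (Fin (r + 1) → ℝ)) ∩
      segment ℝ (-(allOne (r + 1))) (allOne (r + 1)) = ∅)
  have hden := total_card (r := r) (m := m) (fun _ => True)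
  have hnum' : ∀ Z ∈ (VrPlus r).powersetCard m,
      ((Finset.univ : Finset (↥Z → Bool)).filter (fun ε =>
        convexHull ℝ (lift9 Z ε : Set (Fin (r + 1) → ℝ)) ∩
          segment ℝ (-(allOne (r + 1))) (allOne (r + 1)) = ∅)).card = signCount Z := by
    intro Z hZ
    unfold signCount
    congr 1
    exact Finset.filter_congr (fun ε _ => lift_conv (Finset.mem_powersetCard.1 hZ).1 ε)
  have hcard : ∀ Z ∈ (VrPlus r).powersetCard m,
      (Finset.univ : Finset (↥Z → Bool)).card = 2 ^ m := by
    intro Z hZ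
    simp [(Finset.mem_powersetCard.1 hZ).2]
  replace hnum := hnum.trans
    (Finset.sum_congr rfl (fun Z hZ => Eq.trans (by congr!) (hnum' Z hZ)))
  simp only [true_and, Finset.filter_true] at hden
  rw [Finset.sum_congr rfl hcard, Finset.sum_const, smul_eq_mul] at hden
  have hR : ∑ Z ∈ (VrPlus r).powersetCard m, alphaSet Z =
      (∑ Z ∈ (VrPlus r).powersetCard m, (signCount Z : ℝ)) / 2 ^ m := by
    rw [Finset.sum_div]
    refine Finset.sum_congr rfl (fun Z hZ => ?_)
    rw [alphaSet, hcard Z hZ]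
    norm_num
  unfold alpha
  have hfin : (((∑ Z ∈ (VrPlus r).powersetCard m, signCount Z : ℕ) : ℝ)) /
      ((((VrPlus r).powersetCard m).card * 2 ^ m : ℕ) : ℝ) =
      (∑ Z ∈ (VrPlus r).powersetCard m, alphaSet Z) /
        (((VrPlus r).powersetCard m).card : ℝ) := by
    rw [hR, div_div]
    push_cast
    rw [mul_comm (2 ^ m : ℝ)]
  rw [← hfin, ← hnum, ← hden]
  congr!

end
end

section
/- For every finite subset S ⊂ ℝ^r \ {0}: the number of sign vectors ε ∈ {−1,+1}^S with 0 ∉ conv{ε_s · s : s ∈ S} equals χ(S), the number of chambers of the hyperplane arrangement ℋ(S). -/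
open Finset Filter MeasureTheory

open scoped Classical

noncomputable section

/-- The sign vector of a point of the complement. -/
def sgnVec {r : ℕ} (S : Finset (Fin r → ℝ)) (x : ↥(arrComplement S)) : ↥S → Bool :=
  fun s => decide (0 < ∑ i, (s : Fin r → ℝ) i * (x : Fin r → ℝ) i)

lemma sgnVec_pos {r : ℕ} (S : Finset (Fin r → ℝ)) (x : ↥(arrComplement S)) (s : ↥S) :
    0 < (if sgnVec S x s then (1 : ℝ) else -1) *
      ∑ i, (s : Fin r → ℝ) i * (x : Fin r → ℝ) i := by
  have h := x.2 s s.2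
  unfold sgnVec
  by_cases h0 : 0 < ∑ i, (s : Fin r → ℝ) i * (x : Fin r → ℝ) i
  · simp [h0]
  · have : ∑ i, (s : Fin r → ℝ) i * (x : Fin r → ℝ) i < 0 := lt_of_le_of_ne (not_lt.mp h0) h
    simp only [h0, decide_false]
    simpa using this

lemma sgnVec_eq {r : ℕ} (S : Finset (Fin r → ℝ)) (x : ↥(arrComplement S)) (ε : ↥S → Bool)
    (h : ∀ s : ↥S, 0 < (if ε s then (1 : ℝ) else -1) *
      ∑ i, (s : Fin r → ℝ) i * (x : Fin r → ℝ) i) : sgnVec S x = ε := by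
  funext s
  have := h s
  unfold sgnVec
  cases hε : ε s
  · simp only [hε] at this
    simp at this ⊢
    exact this.le
  · simp only [hε] at this
    simpa using this

lemma continuous_sgnVec {r : ℕ} (S : Finset (Fin r → ℝ)) : Continuous (sgnVec S) := by
  refine continuous_pi fun s => ?_
  have hc : Continuous fun x : ↥(arrComplement S) =>
      ∑ i, (s : Fin r → ℝ) i * (x : Fin r → ℝ) i :=
    continuous_finsetSum _ fun i _ =>
      continuous_const.mul ((continuous_apply i).comp continuous_subtype_val)
  refine IsLocallyConstant.continuous ((IsLocallyConstant.iff_eventually_eq _).2 fun x => ?_)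
  rcases lt_or_gt_of_ne (x.2 s s.2) with h | h
  · filter_upwards [hc.continuousAt.eventually_lt_const h] with y hy
    simp [sgnVec, not_lt.mpr h.le, not_lt.mpr hy.le]
  · filter_upwards [hc.continuousAt.eventually_const_lt h] with y hy
    simp [sgnVec, h, hy]

/-- The open cone of a sign vector. -/
def signCone {r : ℕ} (S : Finset (Fin r → ℝ)) (ε : ↥S → Bool) : Set (Fin r → ℝ) :=
  {x | ∀ s : ↥S, 0 < (if ε s then (1 : ℝ) else -1) * ∑ i, (s : Fin r → ℝ) i * x i}

lemma signCone_subset {r : ℕ} (S : Finset (Fin r → ℝ)) (ε : ↥S → Bool) :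
    signCone S ε ⊆ arrComplement S := by
  intro x hx s hs h0
  have := hx ⟨s, hs⟩
  simp [h0] at this

lemma convex_signCone {r : ℕ} (S : Finset (Fin r → ℝ)) (ε : ↥S → Bool) :
    Convex ℝ (signCone S ε) := by
  have : signCone S ε = ⋂ s : ↥S, {x : Fin r → ℝ |
      0 < (if ε s then (1 : ℝ) else -1) * ∑ i, (s : Fin r → ℝ) i * x i} := by
    ext x; simp [signCone]
  rw [this]
  refine convex_iInter fun s => ?_
  refine convex_halfSpace_gt (𝕜 := ℝ) (f := fun x : Fin r → ℝ =>
    (if ε s then (1 : ℝ) else -1) * ∑ i, (s : Fin r → ℝ) i * x i) ⟨fun x y => ?_, fun c x => ?_⟩ 0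
  · simp only [Pi.add_apply, mul_add, Finset.sum_add_distrib]
  · simp only [Pi.smul_apply, smul_eq_mul, Finset.mul_sum]
    exact Finset.sum_congr rfl fun i _ => by ring

lemma fiber_preconnected {r : ℕ} (S : Finset (Fin r → ℝ)) (ε : ↥S → Bool) :
    IsPreconnected {x : ↥(arrComplement S) | sgnVec S x = ε} := by
  rw [← Topology.IsInducing.subtypeVal.isPreconnected_image]
  have : (Subtype.val '' {x : ↥(arrComplement S) | sgnVec S x = ε}) = signCone S ε := by
    ext x
    constructor
    · rintro ⟨y, rfl, rfl⟩
      exact sgnVec_pos S y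
    · intro hx
      exact ⟨⟨x, signCone_subset S ε hx⟩, sgnVec_eq S _ ε hx, rfl⟩
  rw [this]
  exact (convex_signCone S ε).isPreconnected

lemma exists_mem_signCone_iff {r : ℕ} (S : Finset (Fin r → ℝ)) (ε : ↥S → Bool) :
    (signCone S ε).Nonempty ↔ (0 : Fin r → ℝ) ∉ convexHull ℝ
        (Set.range fun s : ↥S => (if ε s then (1 : ℝ) else -1) • (s : Fin r → ℝ)) := by
  constructor
  · rintro ⟨x, hx⟩ h0
    have hconv : Convex ℝ {y : Fin r → ℝ | 0 < ∑ i, y i * x i} := by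
      refine convex_halfSpace_gt (𝕜 := ℝ) (f := fun y : Fin r → ℝ => ∑ i, y i * x i)
        ⟨fun y z => ?_, fun c y => ?_⟩ 0
      · simp only [Pi.add_apply, add_mul, Finset.sum_add_distrib]
      · simp only [Pi.smul_apply, smul_eq_mul, Finset.mul_sum, mul_assoc]
    have hsub := convexHull_min (s := Set.range fun s : ↥S =>
      (if ε s then (1 : ℝ) else -1) • (s : Fin r → ℝ)) (by
        rintro _ ⟨s, rfl⟩
        have := hx s
        rw [Finset.mul_sum] at this
        simpa only [Set.mem_ofPred_eq, Pi.smul_apply, smul_eq_mul, mul_assoc] using this) hconv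
    have := hsub h0
    simp at this
  · intro h0
    obtain ⟨f, u, hu, hf⟩ := geometric_hahn_banach_point_closed (convex_convexHull ℝ _)
      ((Set.finite_range _).isClosed_convexHull ℝ) h0
    refine ⟨fun i => f (Pi.single i 1), fun s => ?_⟩
    have hs := hf _ (subset_convexHull ℝ _ ⟨s, rfl⟩)
    have hrep : f (s : Fin r → ℝ) = ∑ i, (s : Fin r → ℝ) i * f (Pi.single i 1) := by
      conv_lhs => rw [pi_eq_sum_univ' (s : Fin r → ℝ)]
      simp only [map_sum, map_smul, smul_eq_mul]
    rw [map_smul, smul_eq_mul, hrep] at hs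
    rw [map_zero] at hu
    exact hu.trans hs

-- STATEMENT 10
theorem statement10 {r : ℕ} (S : Finset (Fin r → ℝ)) (hS : (0 : Fin r → ℝ) ∉ S) :
    signCount S = chi S := by
  have hinj : Function.Injective (continuous_sgnVec S).connectedComponentsLift := by
    intro a b
    obtain ⟨x, rfl⟩ := ConnectedComponents.surjective_coe a
    obtain ⟨y, rfl⟩ := ConnectedComponents.surjective_coe b
    intro h
    rw [Continuous.connectedComponentsLift_apply_coe,
      Continuous.connectedComponentsLift_apply_coe] at h
    rw [ConnectedComponents.coe_eq_coe']
    exact (fiber_preconnected S (sgnVec S y)).subset_connectedComponent rfl h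
  unfold chi signCount
  rw [← Nat.card_range_of_injective hinj, Nat.card_coe_set_eq, ← Set.ncard_coe_finset]
  congr 1
  ext ε
  rw [Finset.mem_coe, Finset.mem_filter, ← exists_mem_signCone_iff]
  constructor
  · rintro ⟨-, x, hx⟩
    refine ⟨((⟨x, signCone_subset S ε hx⟩ : ↥(arrComplement S)) : ConnectedComponents _), ?_⟩
    rw [Continuous.connectedComponentsLift_apply_coe]
    exact sgnVec_eq S _ ε hx
  · rintro ⟨a, rfl⟩
    obtain ⟨x, rfl⟩ := ConnectedComponents.surjective_coe a
    rw [Continuous.connectedComponentsLift_apply_coe]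
    exact ⟨Finset.mem_univ _, x, sgnVec_pos S x⟩

end
end

section
/- (Harding/Winder) For every m-element subset S of ℝ^r \ {0}, the number of chambers of the hyperplane arrangement defined by S satisfies χ(S) ≤ 2·b(r−1, m−1), where b(p,q) := Σ_{i=0}^{p} C(q,i). -/
open Finset Filter MeasureTheory

open scoped Classical

noncomputable section

/-- The evaluation functional `x ↦ sᵀx`. -/
def evalF {r : ℕ} (s : Fin r → ℝ) : (Fin r → ℝ) →ₗ[ℝ] ℝ where
  toFun x := ∑ i, s i * x i
  map_add' x y := by simp [mul_add, Finset.sum_add_distrib]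
  map_smul' c x := by simp [Finset.mul_sum, mul_left_comm]

/-- The sign patterns on `T` realised by points of `W`. -/
def patterns {r : ℕ} (T : Finset (Fin r → ℝ)) (W : Submodule ℝ (Fin r → ℝ)) :
    Finset (Finset (Fin r → ℝ)) :=
  T.powerset.filter fun A => ∃ x ∈ W, (∀ s ∈ T, evalF s x ≠ 0) ∧ A = T.filter fun s => 0 < evalF s x

/-- Two points with the same signs: the segment keeps the sign. -/
lemma seg_sign {p q a b : ℝ} (ha : 0 ≤ a) (hb : 0 ≤ b) (hab : a + b = 1) (hp : p ≠ 0) (hq : q ≠ 0)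
    (h : 0 < p ↔ 0 < q) : a * p + b * q ≠ 0 ∧ (0 < a * p + b * q ↔ 0 < p) := by
  rcases lt_or_gt_of_ne hp with hp' | hp'
  · have hq' : q < 0 := lt_of_le_of_ne (not_lt.1 fun hh => absurd (h.2 hh) (not_lt.2 hp'.le)) hq
    have : a * p + b * q < 0 := by
      rcases ha.eq_or_lt with rfl | ha'
      · have : b = 1 := by linarith
        subst this; linarith
      · nlinarith [mul_neg_of_pos_of_neg ha' hp', mul_nonneg hb (neg_nonneg.2 hq'.le)]
    exact ⟨this.ne, iff_of_false (not_lt.2 this.le) (not_lt.2 hp'.le)⟩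
  · have hq' : 0 < q := h.1 hp'
    have : 0 < a * p + b * q := by
      rcases ha.eq_or_lt with rfl | ha'
      · have : b = 1 := by linarith
        subst this; linarith
      · nlinarith [mul_pos ha' hp', mul_nonneg hb hq'.le]
    exact ⟨this.ne', iff_of_true this hp'⟩

lemma patterns_insert {r : ℕ} (a : Fin r → ℝ) (T : Finset (Fin r → ℝ)) (ha : a ∉ T)
    (W : Submodule ℝ (Fin r → ℝ)) :
    (patterns (insert a T) W).card ≤
      (patterns T W).card + (patterns T (W ⊓ LinearMap.ker (evalF a))).card := by
  set X := patterns (insert a T) W with hX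
  set X1 := X.filter fun A => a ∈ A
  set X2 := X.filter fun A => a ∉ A
  have hsplit : X1.card + X2.card = X.card := Finset.card_filter_add_card_filter_not _
  have h1 : (X1.image fun A => A.erase a).card = X1.card := by
    apply Finset.card_image_of_injOn
    intro A hA B hB hAB
    have hA' : a ∈ A := (Finset.mem_filter.1 hA).2
    have hB' : a ∈ B := (Finset.mem_filter.1 hB).2
    have hAB' : A.erase a = B.erase a := hAB
    rw [← Finset.insert_erase hA', hAB', Finset.insert_erase hB']
  have key : ∀ A ∈ X, ∃ x ∈ W, evalF a x ≠ 0 ∧ (∀ s ∈ T, evalF s x ≠ 0) ∧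
      A.erase a = (T.filter fun s => 0 < evalF s x) ∧ (a ∈ A ↔ 0 < evalF a x) := by
    intro A hA
    obtain ⟨-, x, hxW, hx, rfl⟩ := Finset.mem_filter.1 hA
    refine ⟨x, hxW, hx a (by simp), fun s hs => hx s (by simp [hs]), ?_, by simp⟩
    ext s
    simp only [Finset.mem_erase, Finset.mem_filter, Finset.mem_insert]
    constructor
    · rintro ⟨h, h' | h', h''⟩
      · exact absurd h' h
      · exact ⟨h', h''⟩
    · rintro ⟨h, h'⟩
      exact ⟨fun e => ha (e ▸ h), Or.inr h, h'⟩
  have hsub : (X1.image fun A => A.erase a) ∪ X2 ⊆ patterns T W := by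
    intro B hB
    have : ∃ A ∈ X, B = A.erase a := by
      rcases Finset.mem_union.1 hB with h | h
      · obtain ⟨A, hA, rfl⟩ := Finset.mem_image.1 h
        exact ⟨A, (Finset.mem_filter.1 hA).1, rfl⟩
      · exact ⟨B, (Finset.mem_filter.1 h).1, (Finset.erase_eq_of_notMem (Finset.mem_filter.1 h).2).symm⟩
    obtain ⟨A, hA, rfl⟩ := this
    obtain ⟨x, hxW, -, hx, he, -⟩ := key A hA
    refine Finset.mem_filter.2 ⟨?_, x, hxW, hx, he⟩
    rw [he]; simp
  have hint : (X1.image fun A => A.erase a) ∩ X2 ⊆ patterns T (W ⊓ LinearMap.ker (evalF a)) := by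
    intro B hB
    obtain ⟨hB1, hB2⟩ := Finset.mem_inter.1 hB
    obtain ⟨A, hA, hAB⟩ := Finset.mem_image.1 hB1
    obtain ⟨hA, haA⟩ := Finset.mem_filter.1 hA
    obtain ⟨hB2, haB⟩ := Finset.mem_filter.1 hB2
    obtain ⟨x, hxW, hxa, hx, he, hs⟩ := key A hA
    obtain ⟨y, hyW, hya, hy, he', hs'⟩ := key B hB2
    rw [Finset.erase_eq_of_notMem haB] at he'
    have px : 0 < evalF a x := hs.1 haA
    have py : evalF a y < 0 := lt_of_le_of_ne (not_lt.1 fun h => haB (hs'.2 h)) hya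
    have hd : 0 < evalF a x - evalF a y := by linarith
    have hsame : ∀ s ∈ T, (0 < evalF s x ↔ 0 < evalF s y) := by
      intro s hsT
      have : s ∈ (T.filter fun s => 0 < evalF s x) ↔ s ∈ (T.filter fun s => 0 < evalF s y) := by
        rw [← he, ← he']; simp only [← hAB]
      simpa [hsT] using this
    set c := -evalF a y / (evalF a x - evalF a y) with hc
    set d := evalF a x / (evalF a x - evalF a y) with hd'
    have hz : ∀ s ∈ T, _ := fun s hsT => seg_sign (a := c) (b := d)
      (div_nonneg (by linarith) hd.le) (div_nonneg px.le hd.le)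
      (by rw [hc, hd']; field_simp; ring) (hx s hsT) (hy s hsT) (hsame s hsT)
    refine Finset.mem_filter.2 ⟨by rw [he']; simp, c • x + d • y,
      ⟨W.add_mem (W.smul_mem _ hxW) (W.smul_mem _ hyW), ?_⟩, ?_, ?_⟩
    · have hne := hd.ne'
      simp only [SetLike.mem_coe, LinearMap.mem_ker, map_add, map_smul, smul_eq_mul, hc, hd']
      field_simp
      ring
    · intro s hsT
      simpa using (hz s hsT).1
    · rw [← hAB, he]
      apply Finset.filter_congr
      intro s hsT
      simpa using (hz s hsT).2.symm
  have := Finset.card_union_add_card_inter (X1.image fun A => A.erase a) X2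
  have h3 := Finset.card_le_card hsub
  have h4 := Finset.card_le_card hint
  omega

lemma patterns_eq_empty {r : ℕ} {T : Finset (Fin r → ℝ)} {W : Submodule ℝ (Fin r → ℝ)}
    {s : Fin r → ℝ} (hs : s ∈ T) (h : ∀ x ∈ W, evalF s x = 0) : patterns T W = ∅ := by
  apply Finset.filter_eq_empty_iff.2
  rintro A - ⟨x, hx, hx', -⟩
  exact hx' s hs (h x hx)

lemma sum_choose_succ (d m : ℕ) : ∑ i ∈ Finset.range (d + 1), (m + 1).choose i =
    ∑ i ∈ Finset.range (d + 1), m.choose i + ∑ i ∈ Finset.range d, m.choose i := by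
  rw [Finset.sum_range_succ', Finset.sum_range_succ' (fun i => m.choose i)]
  simp only [Nat.choose_succ_succ, Finset.sum_add_distrib, Nat.choose_zero_right, Nat.succ_eq_add_one]
  omega

lemma finrank_inf_ker {r : ℕ} (W : Submodule ℝ (Fin r → ℝ)) (f : (Fin r → ℝ) →ₗ[ℝ] ℝ)
    (h : ∃ x ∈ W, f x ≠ 0) :
    Module.finrank ℝ W = Module.finrank ℝ ↥(W ⊓ LinearMap.ker f) + 1 := by
  have h1 := LinearMap.finrank_range_add_finrank_ker (f.domRestrict W)
  have h2 : LinearMap.range (f.domRestrict W) = ⊤ := by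
    apply LinearMap.range_eq_top.2
    apply LinearMap.surjective
    intro h0
    obtain ⟨x, hx, hx'⟩ := h
    exact hx' (by simpa using LinearMap.congr_fun h0 ⟨x, hx⟩)
  have h3 : Submodule.map W.subtype (LinearMap.ker (f.domRestrict W)) = W ⊓ LinearMap.ker f := by
    ext x
    simp [and_comm]
  have h4 := LinearEquiv.finrank_eq (Submodule.equivMapOfInjective W.subtype W.injective_subtype
    (LinearMap.ker (f.domRestrict W)))
  rw [h3] at h4
  rw [h2, finrank_top, Module.finrank_self] at h1
  omega

lemma patterns_card {r : ℕ} (T : Finset (Fin r → ℝ)) (hT : T.Nonempty) :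
    ∀ W : Submodule ℝ (Fin r → ℝ), (patterns T W).card ≤
      2 * ∑ i ∈ Finset.range (Module.finrank ℝ W), (T.card - 1).choose i := by
  induction hT using Finset.Nonempty.cons_induction with
  | singleton a =>
    intro W
    by_cases h : ∀ x ∈ W, evalF a x = 0
    · rw [patterns_eq_empty (Finset.mem_singleton_self a) h]; simp
    · push Not at h
      rw [finrank_inf_ker W _ h, Finset.sum_range_succ']
      have : (patterns {a} W).card ≤ 2 := (Finset.card_filter_le _ _).trans (by simp)
      simp only [Finset.card_singleton, Nat.choose_zero_right]
      omega
  | cons a T ha hT ih =>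
    intro W
    rw [Finset.cons_eq_insert]
    by_cases h : ∀ x ∈ W, evalF a x = 0
    · rw [patterns_eq_empty (Finset.mem_insert_self a T) h]; simp
    · push Not at h
      have e := finrank_inf_ker W _ h
      have h1 := patterns_insert a T ha W
      have h2 := ih W
      have h3 := ih (W ⊓ LinearMap.ker (evalF a))
      obtain ⟨m, hm⟩ : ∃ m, T.card = m + 1 := ⟨T.card - 1, by have := hT.card_pos; omega⟩
      rw [Finset.card_insert_of_notMem ha, hm, e, Nat.add_sub_cancel, sum_choose_succ]
      rw [hm, Nat.add_sub_cancel] at h2 h3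
      rw [e] at h2
      omega

lemma chi_le_patterns {r : ℕ} (S : Finset (Fin r → ℝ)) : chi S ≤ (patterns S ⊤).card := by
  unfold chi
  let rep : ConnectedComponents ↥(arrComplement S) → ↥(arrComplement S) := Quotient.out
  have hrep : ∀ c, ((rep c : ↥(arrComplement S)) : ConnectedComponents ↥(arrComplement S)) = c :=
    fun c => Quotient.out_eq c
  let g : ConnectedComponents ↥(arrComplement S) → ↥(patterns S ⊤) := fun c =>
    ⟨S.filter fun s => 0 < evalF s (rep c).1, Finset.mem_filter.2
      ⟨by simp, (rep c).1, trivial, (rep c).2, rfl⟩⟩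
  have hg : Function.Injective g := by
    intro c d hcd
    rw [← hrep c, ← hrep d]
    generalize hx : rep c = x
    generalize hy : rep d = y
    have hcd' : (S.filter fun s => 0 < evalF s x.1) = S.filter fun s => 0 < evalF s y.1 := by
      have := congrArg Subtype.val hcd
      simpa only [g, hx, hy] using this
    have hsame : ∀ s ∈ S, (0 < evalF s x.1 ↔ 0 < evalF s y.1) := by
      intro s hs
      have : s ∈ (S.filter fun s => 0 < evalF s x.1) ↔ s ∈ (S.filter fun s => 0 < evalF s y.1) := by
        rw [hcd']
      simpa [hs] using this
    have hseg : segment ℝ x.1 y.1 ⊆ arrComplement S := by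
      rintro z ⟨a, b, ha, hb, hab, rfl⟩ s hs
      have := (seg_sign ha hb hab (x.2 s hs) (y.2 s hs) (hsame s hs)).1
      change evalF s (a • x.1 + b • y.1) ≠ 0
      rw [map_add, map_smul, map_smul]
      exact this
    have hpre : IsPreconnected (Subtype.val ⁻¹' segment ℝ x.1 y.1 : Set ↥(arrComplement S)) := by
      rw [← Topology.IsInducing.subtypeVal.isPreconnected_image, Subtype.image_preimage_coe,
        Set.inter_eq_right.2 hseg]
      exact (convex_segment _ _).isPreconnected
    rw [ConnectedComponents.coe_eq_coe']
    exact hpre.subset_connectedComponent (right_mem_segment ℝ x.1 y.1) (left_mem_segment ℝ x.1 y.1)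
  have := Nat.card_le_card_of_injective g hg
  simpa using this

-- STATEMENT 12
theorem statement12 {r : ℕ} (m : ℕ) (S : Finset (Fin r → ℝ)) (hcard : S.card = m)
    (hS : (0 : Fin r → ℝ) ∉ S) :
    chi S ≤ 2 * bFn (r - 1) (m - 1) := by
  refine (chi_le_patterns S).trans ?_
  unfold bFn
  rcases S.eq_empty_or_nonempty with rfl | hne
  · have h1 : (patterns (∅ : Finset (Fin r → ℝ)) ⊤).card ≤ 1 :=
      (Finset.card_filter_le _ _).trans (by simp)
    rw [Finset.sum_range_succ']
    simp only [Nat.choose_zero_right]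
    omega
  · have h := patterns_card S hne ⊤
    rw [finrank_top, Module.finrank_fin_fun, hcard] at h
    refine h.trans (Nat.mul_le_mul_left _ ?_)
    apply Finset.sum_le_sum_of_subset
    apply Finset.range_mono
    omega

end
end
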